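/- Let a : ℝ → [0,1] satisfy (A1') and have √a κ-Lipschitz, and H ∈ 𝓗_sqc(α0,α1,γ,η) with γ > 2; let λ0 be the critical value and, for each μ > λ0, let u⁺_μ, u⁻_μ be the unique C¹ solutions of a u'' + H(x,u') = μ with value 0 at the origin and derivative respectively above and below u'_{λ0} a.e. Then: (i) for λ > μ > λ0, (u⁺_λ)' > (u⁺_μ)' > (u⁻_μ)' > (u⁻_λ)' everywhere on ℝ; (ii) for λ > λ0, lim_{μ→λ} (u⁺_μ)'(x) = (u⁺_λ)'(x) and lim_{μ→λ} (u⁻_μ)'(x) = (u⁻_λ)'(x) for every x ∈ ℝ; (iii) for every R > ‖u'_{λ0}‖_{L^∞(A)} there exists λ_R > λ0 such that for every λ > λ_R, (u⁻_λ)'(x) < −R < R < (u⁺_λ)'(x) for all x ∈ ℝ. -/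

import Mathlib

open Real Set Filter Topology MeasureTheory

noncomputable section

/-- The Hamiltonian class `𝓗(α₀, α₁, γ)`: growth condition (H1) and the local
Lipschitz conditions (H2), (H3). -/
def HamClass (a0 a1 g : ℝ) (H : ℝ → ℝ → ℝ) : Prop :=
  (∀ x p : ℝ, a0 * |p| ^ g - 1 / a0 ≤ H x p) ∧
  (∀ x p : ℝ, H x p ≤ a1 * (|p| ^ g + 1)) ∧
  (∀ x p q : ℝ, |H x p - H x q| ≤ a1 * (|p| + |q| + 1) ^ (g - 1) * |p - q|) ∧
  (∀ x y p : ℝ, |H x p - H y p| ≤ a1 * (|p| ^ g + 1) * |x - y|)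

/-- The strictly quasiconvex class `𝓗_sqc(α₀, α₁, γ, η)` with (unique) minimizer map
`phat`. -/
def HamSqc (a0 a1 g eta : ℝ) (H : ℝ → ℝ → ℝ) (phat : ℝ → ℝ) : Prop :=
  HamClass a0 a1 g H ∧
  (∀ x p : ℝ, H x (phat x) ≤ H x p) ∧
  (∀ x p : ℝ, (∀ q : ℝ, H x p ≤ H x q) → p = phat x) ∧
  (∀ x p1 p2 : ℝ, p1 < p2 → p2 ≤ phat x → eta * |p1 - p2| ≤ H x p1 - H x p2) ∧
  (∀ x p1 p2 : ℝ, phat x ≤ p1 → p1 < p2 → eta * |p1 - p2| ≤ H x p2 - H x p1)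

/-- A continuous `u` is a viscosity supersolution of `a(x) u'' + H(x, u') = lam` on `U`:
at every local minimum point `x0 ∈ U` of `u - φ`, with `φ` of class `C²`, one has
`a(x0) φ''(x0) + H(x0, φ'(x0)) ≤ lam`. -/
def ViscSuperOn (a : ℝ → ℝ) (H : ℝ → ℝ → ℝ) (lam : ℝ) (U : Set ℝ) (u : ℝ → ℝ) : Prop :=
  ∀ φ : ℝ → ℝ, ContDiff ℝ 2 φ → ∀ x0 ∈ U, IsLocalMin (fun x => u x - φ x) x0 →
    a x0 * deriv (deriv φ) x0 + H x0 (deriv φ x0) ≤ lam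

/-- Viscosity subsolution of `a(x) u'' + H(x, u') = lam` on `U`. -/
def ViscSubOn (a : ℝ → ℝ) (H : ℝ → ℝ → ℝ) (lam : ℝ) (U : Set ℝ) (u : ℝ → ℝ) : Prop :=
  ∀ φ : ℝ → ℝ, ContDiff ℝ 2 φ → ∀ x0 ∈ U, IsLocalMax (fun x => u x - φ x) x0 →
    lam ≤ a x0 * deriv (deriv φ) x0 + H x0 (deriv φ x0)

/-- Viscosity solution of `a(x) u'' + H(x, u') = lam` on `U`. -/
def ViscSolOn (a : ℝ → ℝ) (H : ℝ → ℝ → ℝ) (lam : ℝ) (U : Set ℝ) (u : ℝ → ℝ) : Prop :=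
  ViscSubOn a H lam U u ∧ ViscSuperOn a H lam U u

/-- The critical value `λ₀`: the infimum of the levels `lam` at which the stationary
equation `a u'' + H(x, u') = lam` admits a continuous viscosity supersolution on `ℝ`. -/
def CriticalValue (a : ℝ → ℝ) (H : ℝ → ℝ → ℝ) : ℝ :=
  sInf {lam : ℝ | ∃ u : ℝ → ℝ, Continuous u ∧ ViscSuperOn a H lam Set.univ u}

/-- Condition (A1'): `a ≢ 0` and every connected component of `A := {a > 0}` is bounded
(components of an open subset of `ℝ` are automatically open intervals). -/
def CondA1' (a : ℝ → ℝ) : Prop :=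
  (∃ x, a x ≠ 0) ∧
  ∀ x, 0 < a x → Bornology.IsBounded (connectedComponentIn {y : ℝ | 0 < a y} x)

/-!
The derivative `v = u'` of a `C¹` solution solves the first-order equation `a v' + H(x, v) = λ`:
where `a > 0` this follows by testing with quadratics, and where `a = 0` the bound
`a(y) ≤ κ² (y - x)²` makes the second-order term disappear, so that `H(x, v(x)) = λ`. At such points
`(u⁻)' ≠ (u⁺)'`, since otherwise the sandwiched solution at level `λ₀` would be differentiable with
the same slope, so `(u⁻)'` and `(u⁺)'` lie on the two sides of the minimizer of `H(x, ·)`.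

There is a zero of `a` to the left of every point, so a strict inequality for `(u⁺)'` that holds at
the zeros propagates to the right: two functions cannot cross where `a v' + H(x, v)` is strictly
larger for the upper one. This yields the monotonicity in `λ` and, comparing with constants, the
growth as `λ → ∞`. For the continuity in `λ`, the quasiconvexity of `H` bounds `(u⁺_λ)' - (u⁺_μ)'`
by `(λ - μ) / η` as long as the branches stay on the increasing side of `H`, which covers a
neighbourhood of the last zero of `a`; from there on `a` is bounded below and Gronwall's inequality
applies. The reflection `x ↦ -x`, `p ↦ -p` exchanges `u⁺` and `u⁻`.
-/

section RealAnalysis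

lemma eventually_lt_nhdsLT_of_hasDerivAt_pos {f : ℝ → ℝ} {d t : ℝ} (hf : HasDerivAt f d t)
    (hd : 0 < d) : ∀ᶠ s in 𝓝[<] t, f s < f t := by
  have hslope := (hasDerivAt_iff_tendsto_slope_left_right.1 hf).1.eventually_const_lt hd
  filter_upwards [hslope, self_mem_nhdsWithin] with s hs hst
  rw [slope_comm] at hs
  exact (slope_pos_iff_of_le (le_of_lt hst)).1 hs

lemma eventually_gt_nhdsGT_of_hasDerivAt_pos {f : ℝ → ℝ} {d t : ℝ} (hf : HasDerivAt f d t)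
    (hd : 0 < d) : ∀ᶠ s in 𝓝[>] t, f t < f s := by
  have hslope := (hasDerivAt_iff_tendsto_slope_left_right.1 hf).2.eventually_const_lt hd
  filter_upwards [hslope, self_mem_nhdsWithin] with s hs hts
  exact (slope_pos_iff_of_le (le_of_lt hts)).1 hs

lemma pos_of_hasDerivAt_pos_at_zeros {g : ℝ → ℝ} (hg : Continuous g) {y x : ℝ} (hyx : y ≤ x)
    (hy : 0 < g y) (hzero : ∀ t ∈ Ioc y x, g t = 0 → ∃ d, 0 < d ∧ HasDerivAt g d t) :
    0 < g x := by
  by_contra! hx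
  have hcompact : IsCompact (Icc y x ∩ {t | g t ≤ 0}) :=
    isCompact_Icc.inter_right (isClosed_le hg continuous_const)
  obtain ⟨t, ⟨⟨hyt, htx⟩, hgt⟩, hleast⟩ := hcompact.exists_isLeast ⟨x, ⟨hyx, le_rfl⟩, hx⟩
  have hyt : y < t := hyt.lt_of_ne (by rintro rfl; exact hy.not_ge hgt)
  have hneg : ∀ᶠ s in 𝓝[<] t, g s < 0 := by
    rcases (show g t ≤ 0 from hgt).lt_or_eq with hlt | heq
    · exact nhdsWithin_le_nhds (hg.continuousAt.eventually_lt_const hlt)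
    · obtain ⟨d, hd, hderiv⟩ := hzero t ⟨hyt, htx⟩ heq
      simpa only [heq] using eventually_lt_nhdsLT_of_hasDerivAt_pos hderiv hd
  obtain ⟨s, hs, hys, hst⟩ := (hneg.and (Ioo_mem_nhdsLT hyt)).exists
  exact hst.not_ge (hleast ⟨⟨hys.le, hst.le.trans htx⟩, hs.le⟩)

lemma exists_isLocalMax_mem_Ioo {f : ℝ → ℝ} {s t ds dt : ℝ} (hst : s < t)
    (hf : ContinuousOn f (Icc s t)) (hs : HasDerivAt f ds s) (hds : 0 < ds)
    (ht : HasDerivAt f dt t) (hdt : dt < 0) : ∃ z ∈ Ioo s t, IsLocalMax f z := by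
  obtain ⟨z, ⟨hsz, hzt⟩, hmax⟩ := isCompact_Icc.exists_isMaxOn (nonempty_Icc.2 hst.le) hf
  have hzs : s ≠ z := by
    rintro rfl
    obtain ⟨y, hfy, hy⟩ :=
      ((eventually_gt_nhdsGT_of_hasDerivAt_pos hs hds).and (Ioo_mem_nhdsGT hst)).exists
    exact hfy.not_ge (hmax (Ioo_subset_Icc_self hy))
  have hzt' : z ≠ t := by
    rintro rfl
    obtain ⟨y, hfy, hy⟩ := ((eventually_lt_nhdsLT_of_hasDerivAt_pos ht.neg (neg_pos.2 hdt)).and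
      (Ioo_mem_nhdsLT hst)).exists
    exact (neg_lt_neg_iff.1 hfy).not_ge (hmax (Ioo_subset_Icc_self hy))
  exact ⟨z, ⟨hsz.lt_of_ne hzs, hzt.lt_of_ne hzt'⟩,
    hmax.isLocalMax (Icc_mem_nhds (hsz.lt_of_ne hzs) (hzt.lt_of_ne hzt'))⟩

lemma monotone_sub_of_deriv_ae_le {u v : ℝ → ℝ} (hu : LocallyLipschitz u)
    (hv : LocallyLipschitz v) (h : deriv u ≤ᵐ[volume] deriv v) : Monotone fun x => v x - u x := by
  intro x y hxy
  have hac {w : ℝ → ℝ} (hw : LocallyLipschitz w) : AbsolutelyContinuousOnInterval w x y :=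
    (hw.locallyLipschitzOn.exists_lipschitzOnWith_of_compact
      isCompact_uIcc).choose_spec.absolutelyContinuousOnInterval
  have hincr : u y - u x ≤ v y - v x := by
    rw [← (hac hu).integral_deriv_eq_sub, ← (hac hv).integral_deriv_eq_sub]
    exact intervalIntegral.integral_mono_ae hxy (hac hu).intervalIntegrable_deriv
      (hac hv).intervalIntegrable_deriv h
  change v x - u x ≤ v y - u y
  linarith

lemma slope_le_slope_of_monotone_sub {u v : ℝ → ℝ} (h : Monotone fun x => v x - u x)
    (x y : ℝ) : slope u x y ≤ slope v x y := by
  have hnonneg := (h.monotoneOn univ).slope_nonneg (mem_univ x) (mem_univ y)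
  simp only [slope_def_field] at hnonneg ⊢
  rw [← sub_nonneg]
  exact hnonneg.trans_eq (by ring)

lemma deriv_le_deriv_of_monotone_sub {u v : ℝ → ℝ} {x : ℝ} (h : Monotone fun y => v y - u y)
    (hu : DifferentiableAt ℝ u x) (hv : DifferentiableAt ℝ v x) : deriv u x ≤ deriv v x :=
  sub_nonneg.1 ((hv.hasDerivAt.sub hu.hasDerivAt).nonneg_of_monotone h)

lemma hasDerivAt_of_monotone_sub {u v w : ℝ → ℝ} {x q : ℝ}
    (hvu : Monotone fun y => v y - u y) (hwv : Monotone fun y => w y - v y)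
    (hu : HasDerivAt u q x) (hw : HasDerivAt w q x) : HasDerivAt v q x := by
  rw [hasDerivAt_iff_tendsto_slope] at *
  exact tendsto_of_tendsto_of_tendsto_of_le_of_le hu hw (slope_le_slope_of_monotone_sub hvu x)
    (slope_le_slope_of_monotone_sub hwv x)

lemma gronwallBound_mul_left (s δ K ε x : ℝ) :
    gronwallBound (s * δ) K (s * ε) x = s * gronwallBound δ K ε x := by
  unfold gronwallBound
  split_ifs <;> ring

end RealAnalysis

section QuadraticTestFunctions

/-- The quadratic function with slope `p` at `x₀` and second derivative `c`, the only kind of test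
function needed below. -/
def quadratic (x₀ p c x : ℝ) : ℝ := p * (x - x₀) + c / 2 * (x - x₀) ^ 2

lemma contDiff_quadratic (x₀ p c : ℝ) : ContDiff ℝ 2 (quadratic x₀ p c) := by
  unfold quadratic
  fun_prop

lemma hasDerivAt_quadratic (x₀ p c x : ℝ) :
    HasDerivAt (quadratic x₀ p c) (p + c * (x - x₀)) x := by
  have hlin : HasDerivAt (fun y : ℝ => y - x₀) 1 x := (hasDerivAt_id x).sub_const x₀
  exact ((hlin.const_mul p).add ((hlin.pow 2).const_mul (c / 2))).congr_deriv (by push_cast; ring)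

lemma deriv_quadratic (x₀ p c : ℝ) : deriv (quadratic x₀ p c) = fun x => p + c * (x - x₀) :=
  funext fun x => (hasDerivAt_quadratic x₀ p c x).deriv

lemma deriv_deriv_quadratic (x₀ p c x : ℝ) : deriv (deriv (quadratic x₀ p c)) x = c := by
  rw [deriv_quadratic]
  simp

lemma exists_isLocalMax_sub_quadratic {u : ℝ → ℝ} (hu : Continuous u) {x₀ q : ℝ}
    (hq : HasDerivAt u q x₀) {ε : ℝ} (hε : 0 < ε) :
    ∃ c z, 0 ≤ c ∧ |z - x₀| ≤ ε ∧ c * |z - x₀| ≤ ε ∧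
      IsLocalMax (fun x => u x - quadratic x₀ q c x) z := by
  obtain ⟨δ', hδ', hlittle⟩ :=
    Metric.eventually_nhds_iff.1 ((hasDerivAt_iff_isLittleO.1 hq).def (by positivity : 0 < ε / 4))
  set δ := min (δ' / 2) ε
  have hδ : 0 < δ := by positivity
  have hcδ : ε / δ * δ = ε := div_mul_cancel₀ ε hδ.ne'
  obtain ⟨z, hz, hmax⟩ := (isCompact_Icc (a := x₀ - δ) (b := x₀ + δ)).exists_isMaxOn
    ⟨x₀, by linarith, by linarith⟩
    (hu.sub (contDiff_quadratic x₀ q (ε / δ)).continuous).continuousOn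
  have hzδ : |z - x₀| ≤ δ := abs_le.2 ⟨by linarith [hz.1], by linarith [hz.2]⟩
  have hmax₀ : u x₀ ≤ u z - (q * (z - x₀) + ε / δ / 2 * |z - x₀| ^ 2) := by
    simpa [quadratic] using hmax (show x₀ ∈ Icc (x₀ - δ) (x₀ + δ) from ⟨by linarith, by linarith⟩)
  have hexpand : u z - u x₀ - (z - x₀) * q ≤ ε / 4 * |z - x₀| := by
    have hz' : dist z x₀ < δ' := by
      rw [Real.dist_eq]
      linarith [min_le_left (δ' / 2) ε]
    simpa using (le_abs_self _).trans (hlittle hz')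
  have hcz : ε / δ * |z - x₀| ≤ ε / 2 := by
    rcases (abs_nonneg (z - x₀)).eq_or_lt with hzero | hpos
    · rw [← hzero, mul_zero]
      positivity
    · exact le_of_mul_le_mul_right (by nlinarith) hpos
  have hzlt : |z - x₀| < δ := by
    by_contra! hge
    have := mul_le_mul_of_nonneg_left hge (by positivity : 0 ≤ ε / δ)
    linarith
  rw [abs_lt] at hzlt
  exact ⟨ε / δ, z, by positivity, hzδ.trans (min_le_right _ _), by linarith,
    hmax.isLocalMax (Icc_mem_nhds (by linarith) (by linarith))⟩

end QuadraticTestFunctions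

section Viscosity

variable {a : ℝ → ℝ} {H : ℝ → ℝ → ℝ} {lam : ℝ} {u : ℝ → ℝ}

lemma ViscSuperOn.neg {U : Set ℝ} (h : ViscSuperOn a H lam U u) :
    ViscSubOn a (fun x p => -H x (-p)) (-lam) U (fun x => -u x) := by
  intro φ hφ x₀ hx₀ hmax
  have hmin : IsLocalMin (fun x => u x - -φ x) x₀ :=
    hmax.neg.congr (.of_forall fun x => by ring)
  have hineq := h (fun x => -φ x) hφ.neg x₀ hx₀ hmin
  simp only [deriv.fun_neg'] at hineq
  linarith

lemma ViscSubOn.le_of_isLocalMax_sub_quadratic {U : Set ℝ} (h : ViscSubOn a H lam U u)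
    {x₀ p c z : ℝ} (hz : z ∈ U) (hmax : IsLocalMax (fun x => u x - quadratic x₀ p c x) z) :
    lam ≤ a z * c + H z (p + c * (z - x₀)) := by
  have hineq := h _ (contDiff_quadratic x₀ p c) z hz hmax
  rwa [deriv_deriv_quadratic, deriv_quadratic] at hineq

lemma ViscSubOn.le_of_hasDerivAt_of_le_sq (h : ViscSubOn a H lam univ u)
    (hH : Continuous (Function.uncurry H)) (hu : Continuous u) {x₀ q K : ℝ} (hK : 0 ≤ K)
    (ha : ∀ x, a x ≤ K * (x - x₀) ^ 2) (hq : HasDerivAt u q x₀) : lam ≤ H x₀ q := by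
  have happrox (n : ℕ) : ∃ z p, |z - x₀| ≤ 1 / (n + 1) ∧ |p - q| ≤ 1 / (n + 1) ∧
      lam ≤ K * (1 / (n + 1)) ^ 2 + H z p := by
    obtain ⟨c, z, hc, hz, hcz, hmax⟩ :=
      exists_isLocalMax_sub_quadratic hu hq (ε := 1 / (n + 1 : ℝ)) (by positivity)
    have hvisc := h.le_of_isLocalMax_sub_quadratic (mem_univ z) hmax
    have hdiffusion : a z * c ≤ K * (1 / (n + 1 : ℝ)) ^ 2 := calc
      a z * c ≤ K * (z - x₀) ^ 2 * c := mul_le_mul_of_nonneg_right (ha z) hc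
      _ = K * (|z - x₀| * (c * |z - x₀|)) := by rw [← sq_abs]; ring
      _ ≤ K * (1 / (n + 1 : ℝ)) ^ 2 := by rw [sq]; gcongr
    refine ⟨z, q + c * (z - x₀), hz, ?_, by linarith⟩
    rwa [add_sub_cancel_left, abs_mul, abs_of_nonneg hc]
  choose z p hz hp hle using happrox
  have hε := tendsto_one_div_add_atTop_nhds_zero_nat (𝕜 := ℝ)
  have hzlim : Tendsto z atTop (𝓝 x₀) :=
    tendsto_iff_dist_tendsto_zero.2 (squeeze_zero (fun _ => dist_nonneg) hz hε)
  have hplim : Tendsto p atTop (𝓝 q) :=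
    tendsto_iff_dist_tendsto_zero.2 (squeeze_zero (fun _ => dist_nonneg) hp hε)
  have hlim := ((hε.pow 2).const_mul K).add
    ((hH.tendsto (x₀, q)).comp (hzlim.prodMk_nhds hplim))
  simpa using ge_of_tendsto' hlim hle

lemma ViscSolOn.eq_of_hasDerivAt_of_le_sq (h : ViscSolOn a H lam univ u)
    (hH : Continuous (Function.uncurry H)) (hu : Continuous u) {x₀ q K : ℝ} (hK : 0 ≤ K)
    (ha : ∀ x, a x ≤ K * (x - x₀) ^ 2) (hq : HasDerivAt u q x₀) : H x₀ q = lam := by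
  refine le_antisymm ?_ (h.1.le_of_hasDerivAt_of_le_sq hH hu hK ha hq)
  have hHneg : Continuous (Function.uncurry fun x p => -H x (-p)) :=
    (hH.comp (continuous_fst.prodMk continuous_snd.neg)).neg
  simpa using h.2.neg.le_of_hasDerivAt_of_le_sq hHneg hu.neg hK ha hq.neg

-- Otherwise a quadratic with second derivative `c` would touch `u` from above inside `(s, t)`.
lemma ViscSubOn.mul_sub_le_deriv_sub (h : ViscSubOn a H lam univ u) (hu : Differentiable ℝ u)
    {s t c : ℝ} (hst : s < t) (hc : ∀ z ∈ Ioo s t, a z * c + H z (deriv u z) < lam) :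
    c * (t - s) ≤ deriv u t - deriv u s := by
  by_contra! hlt
  obtain ⟨p, hp_gt, hp_lt⟩ := exists_between (show deriv u t - c * (t - s) < deriv u s by linarith)
  have hderiv (x : ℝ) : HasDerivAt (fun y => u y - quadratic s p c y)
      (deriv u x - (p + c * (x - s))) x := (hu x).hasDerivAt.sub (hasDerivAt_quadratic s p c x)
  obtain ⟨z, hz, hmax⟩ := exists_isLocalMax_mem_Ioo hst
    (hu.continuous.sub (contDiff_quadratic s p c).continuous).continuousOn
    (hderiv s) (by linarith) (hderiv t) (by linarith)
  have hslope : deriv u z = p + c * (z - s) := sub_eq_zero.1 (hmax.hasDerivAt_eq_zero (hderiv z))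
  have hvisc := h.le_of_isLocalMax_sub_quadratic (mem_univ z) hmax
  rw [← hslope] at hvisc
  exact (hc z hz).not_ge hvisc

lemma ViscSubOn.eventually_lt_slope_deriv (h : ViscSubOn a H lam univ u) (ha : Continuous a)
    (hH : Continuous (Function.uncurry H)) (hu : ContDiff ℝ 1 u) {x₀ c : ℝ} (hx₀ : 0 < a x₀)
    (hc : c < (lam - H x₀ (deriv u x₀)) / a x₀) :
    ∀ᶠ x in 𝓝[≠] x₀, c < slope (deriv u) x₀ x := by
  obtain ⟨c', hcc', hc'⟩ := exists_between hc
  obtain ⟨hdiff, hcont⟩ := contDiff_one_iff_deriv.1 hu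
  have hlevel : Continuous fun x => a x * c' + H x (deriv u x) :=
    (ha.mul continuous_const).add (hH.comp (continuous_id.prodMk hcont))
  have hstrict : ∀ᶠ x in 𝓝 x₀, a x * c' + H x (deriv u x) < lam := by
    refine hlevel.continuousAt.eventually_lt_const ?_
    rw [lt_div_iff₀ hx₀] at hc'
    linarith
  obtain ⟨l, r, ⟨hl, hr⟩, hlr⟩ := mem_nhds_iff_exists_Ioo_subset.1 hstrict
  filter_upwards [nhdsWithin_le_nhds (Ioo_mem_nhds hl hr), self_mem_nhdsWithin] with x hx hne
  refine hcc'.trans_le ?_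
  rcases lt_or_gt_of_ne (show x ≠ x₀ from hne) with hlt | hgt
  · rw [slope_comm, slope_def_field, le_div_iff₀ (sub_pos.2 hlt)]
    exact h.mul_sub_le_deriv_sub hdiff hlt
      fun z hz => hlr ⟨hx.1.trans hz.1, hz.2.trans hr⟩
  · rw [slope_def_field, le_div_iff₀ (sub_pos.2 hgt)]
    exact h.mul_sub_le_deriv_sub hdiff hgt
      fun z hz => hlr ⟨hl.trans hz.1, hz.2.trans hx.2⟩

lemma ViscSolOn.hasDerivAt_deriv (h : ViscSolOn a H lam univ u) (ha : Continuous a)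
    (hH : Continuous (Function.uncurry H)) (hu : ContDiff ℝ 1 u) {x₀ : ℝ} (hx₀ : 0 < a x₀) :
    HasDerivAt (deriv u) ((lam - H x₀ (deriv u x₀)) / a x₀) x₀ := by
  rw [hasDerivAt_iff_tendsto_slope, tendsto_order]
  refine ⟨fun c hc => h.1.eventually_lt_slope_deriv ha hH hu hx₀ hc, fun c hc => ?_⟩
  have hHneg : Continuous (Function.uncurry fun x p => -H x (-p)) :=
    (hH.comp (continuous_fst.prodMk continuous_snd.neg)).neg
  have hneg : ∀ᶠ x in 𝓝[≠] x₀, -c < slope (deriv fun y => -u y) x₀ x := by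
    refine h.2.neg.eventually_lt_slope_deriv ha hHneg hu.neg hx₀ ?_
    simp only [deriv.fun_neg, neg_neg]
    rw [← neg_sub', neg_div]
    exact neg_lt_neg hc
  filter_upwards [hneg] with x hx
  rw [deriv.fun_neg', slope_neg] at hx
  exact neg_lt_neg_iff.1 hx

end Viscosity

section Hamiltonian

/-- The properties of a Hamiltonian `H` that drive the argument: regularity, boundedness from above
in `x`, and growth at rate at least `η` in `p` away from the minimizer `phat x` of `H x`. -/
structure IsQuasiconvexHamiltonian (η : ℝ) (H : ℝ → ℝ → ℝ) (phat : ℝ → ℝ) : Prop where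
  eta_pos : 0 < η
  continuous : Continuous (Function.uncurry H)
  lipschitzOn : ∀ P : ℝ, ∃ L : NNReal, ∀ x, LipschitzOnWith L (H x) (Icc (-P) P)
  bddAbove : ∀ p, BddAbove (range fun x => H x p)
  mul_sub_le_left : ∀ x p q, p ≤ q → q ≤ phat x → η * (q - p) ≤ H x p - H x q
  mul_sub_le_right : ∀ x p q, phat x ≤ p → p ≤ q → η * (q - p) ≤ H x q - H x p

namespace IsQuasiconvexHamiltonian

variable {η : ℝ} {H : ℝ → ℝ → ℝ} {phat : ℝ → ℝ}

lemma reflect (hH : IsQuasiconvexHamiltonian η H phat) :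
    IsQuasiconvexHamiltonian η (fun x p => H (-x) (-p)) (fun x => -phat (-x)) where
  eta_pos := hH.eta_pos
  continuous := hH.continuous.comp (continuous_fst.neg.prodMk continuous_snd.neg)
  lipschitzOn P := by
    obtain ⟨L, hL⟩ := hH.lipschitzOn P
    refine ⟨L, fun x p hp q hq => ?_⟩
    have hneg := hL (-x) (neg_mem_Icc_iff.2 (by simpa using hp))
      (neg_mem_Icc_iff.2 (by simpa using hq))
    rwa [edist_neg_neg] at hneg
  bddAbove p := (hH.bddAbove (-p)).mono (range_comp_subset_range Neg.neg fun x => H x (-p))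
  mul_sub_le_left x p q hpq hq := by
    have := hH.mul_sub_le_right (-x) (-q) (-p) (by linarith) (by linarith)
    linarith
  mul_sub_le_right x p q hp hpq := by
    have := hH.mul_sub_le_left (-x) (-q) (-p) (by linarith) (by linarith)
    linarith

lemma strictMonoOn_Ici (hH : IsQuasiconvexHamiltonian η H phat) (x : ℝ) :
    StrictMonoOn (H x) (Ici (phat x)) := fun p hp q _ hpq => by
  have hgrowth := hH.mul_sub_le_right x p q hp hpq.le
  have := mul_pos hH.eta_pos (sub_pos.2 hpq)
  linarith

lemma strictAntiOn_Iic (hH : IsQuasiconvexHamiltonian η H phat) (x : ℝ) :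
    StrictAntiOn (H x) (Iic (phat x)) := fun p _ q hq hpq => by
  have hgrowth := hH.mul_sub_le_left x p q hpq.le hq
  have := mul_pos hH.eta_pos (sub_pos.2 hpq)
  linarith

lemma lt_of_apply_lt (hH : IsQuasiconvexHamiltonian η H phat) {x p q : ℝ} (hq : phat x ≤ q)
    (hpq : H x p < H x q) : p < q := by
  by_contra! hqp
  exact hpq.not_ge ((hH.strictMonoOn_Ici x).monotoneOn hq (hq.trans hqp) hqp)

lemma lt_phat_and_phat_lt_of_apply_eq (hH : IsQuasiconvexHamiltonian η H phat) {x p q : ℝ}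
    (hpq : p < q) (heq : H x p = H x q) : p < phat x ∧ phat x < q := by
  constructor <;> by_contra! hle
  · exact (hH.strictMonoOn_Ici x hle (hle.trans hpq.le) hpq).ne heq
  · exact (hH.strictAntiOn_Iic x (hpq.le.trans hle) hle hpq).ne' heq

-- `phat` need not be continuous, but a value `f t` above `phat l` with `H t (phat l) < H t (f t)`
-- is on the increasing side of `H t`.
lemma eventually_phat_lt (hH : IsQuasiconvexHamiltonian η H phat) {f : ℝ → ℝ} (hf : Continuous f)
    {l : ℝ} (hl : phat l < f l) : ∀ᶠ t in 𝓝 l, phat t < f t := by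
  have hHf : Continuous fun t => H t (f t) := hH.continuous.comp (continuous_id.prodMk hf)
  have hHl : Continuous fun t => H t (phat l) :=
    hH.continuous.comp (continuous_id.prodMk continuous_const)
  filter_upwards [hf.continuousAt.eventually_const_lt hl,
    hHl.continuousAt.eventually_lt hHf.continuousAt (hH.strictMonoOn_Ici l self_mem_Ici hl.le hl)]
    with t ht hHt
  by_contra! hle
  exact hHt.not_ge ((hH.strictAntiOn_Iic t).antitoneOn (ht.le.trans hle) hle ht.le)

end IsQuasiconvexHamiltonian

lemma HamClass.continuous_uncurry {α0 α1 γ : ℝ} {H : ℝ → ℝ → ℝ} (hH : HamClass α0 α1 γ H) :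
    Continuous (Function.uncurry H) := by
  obtain ⟨-, -, hHp, hHx⟩ := hH
  refine continuous_iff_continuousAt.2 fun ⟨x, p⟩ => tendsto_iff_dist_tendsto_zero.2 ?_
  have hbound : Continuous fun z : ℝ × ℝ =>
      α1 * (|z.2| + |p| + 1) ^ (γ - 1) * |z.2 - p| + α1 * (|p| ^ γ + 1) * |z.1 - x| := by
    have : Continuous fun z : ℝ × ℝ => (|z.2| + |p| + 1) ^ (γ - 1) :=
      Continuous.rpow_const (by fun_prop) fun z => .inl (by positivity)
    fun_prop
  refine squeeze_zero (fun _ => dist_nonneg) (fun z => ?_)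
    (by simpa using hbound.tendsto (x, p))
  exact (abs_sub_le _ (H z.1 p) _).trans (add_le_add (hHp z.1 z.2 p) (hHx z.1 x p))

lemma HamClass.exists_lipschitzOnWith {α0 α1 γ : ℝ} {H : ℝ → ℝ → ℝ} (hH : HamClass α0 α1 γ H)
    (hα1 : 0 ≤ α1) (P : ℝ) : ∃ L : NNReal, ∀ x, LipschitzOnWith L (H x) (Icc (-P) P) := by
  refine ⟨(α1 * (2 * |P| + 1) ^ |γ - 1|).toNNReal, fun x =>
    LipschitzOnWith.of_dist_le_mul fun p hp q hq => ?_⟩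
  rw [Real.coe_toNNReal _ (by positivity), Real.dist_eq, Real.dist_eq]
  have hbase : |p| + |q| + 1 ≤ 2 * |P| + 1 := by
    linarith [abs_le.2 hp, abs_le.2 hq, le_abs_self P]
  calc |H x p - H x q| ≤ α1 * (|p| + |q| + 1) ^ (γ - 1) * |p - q| := hH.2.2.1 x p q
    _ ≤ α1 * (|p| + |q| + 1) ^ |γ - 1| * |p - q| := by
      gcongr
      · linarith [abs_nonneg p, abs_nonneg q]
      · exact le_abs_self _
    _ ≤ α1 * (2 * |P| + 1) ^ |γ - 1| * |p - q| := by gcongr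

lemma HamSqc.isQuasiconvexHamiltonian {α0 α1 γ η : ℝ} {H : ℝ → ℝ → ℝ} {phat : ℝ → ℝ}
    (hH : HamSqc α0 α1 γ η H phat) (hα1 : 0 ≤ α1) (hη : 0 < η) :
    IsQuasiconvexHamiltonian η H phat where
  eta_pos := hη
  continuous := hH.1.continuous_uncurry
  lipschitzOn := hH.1.exists_lipschitzOnWith hα1
  bddAbove p := ⟨α1 * (|p| ^ γ + 1), by rintro _ ⟨x, rfl⟩; exact hH.1.2.1 x p⟩
  mul_sub_le_left x p q hpq hq := by
    rcases hpq.eq_or_lt with rfl | hlt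
    · simp
    · simpa [abs_of_neg (sub_neg.2 hlt)] using hH.2.2.2.1 x p q hlt hq
  mul_sub_le_right x p q hp hpq := by
    rcases hpq.eq_or_lt with rfl | hlt
    · simp
    · simpa [abs_of_neg (sub_neg.2 hlt)] using hH.2.2.2.2 x p q hp hlt

end Hamiltonian

section Residual

/-- `HasResidualAt a H v r x` says that `a v' + H(·, v)` takes the value `r` at `x`. This is the
equation satisfied by `v = u'` when `a u'' + H(·, u') = r`; where `a` vanishes, no differentiability
of `v` is required. -/
def HasResidualAt (a : ℝ → ℝ) (H : ℝ → ℝ → ℝ) (v : ℝ → ℝ) (r x : ℝ) : Prop :=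
  ∃ d, (a x ≠ 0 → HasDerivAt v d x) ∧ a x * d + H x (v x) = r

variable {a : ℝ → ℝ} {H : ℝ → ℝ → ℝ}

lemma hasResidualAt_const (p x : ℝ) : HasResidualAt a H (fun _ => p) (H x p) x :=
  ⟨0, fun _ => hasDerivAt_const x p, by simp⟩

namespace HasResidualAt

variable {v f g : ℝ → ℝ} {r x : ℝ}

lemma apply_eq (h : HasResidualAt a H v r x) (hx : a x = 0) : H x (v x) = r := by
  obtain ⟨d, -, heq⟩ := h
  simpa [hx] using heq

lemma hasDerivAt (h : HasResidualAt a H v r x) (hx : a x ≠ 0) :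
    HasDerivAt v ((r - H x (v x)) / a x) x := by
  obtain ⟨d, hd, rfl⟩ := h
  exact (hd hx).congr_deriv (by field_simp; ring)

lemma sub_const (h : HasResidualAt a H v r x) (B : ℝ) :
    HasResidualAt a H (fun y => v y - B) (r - H x (v x) + H x (v x - B)) x := by
  obtain ⟨d, hd, rfl⟩ := h
  exact ⟨d, fun hx => (hd hx).sub_const B, by ring⟩

lemma reflect (h : HasResidualAt a H v r (-x)) :
    HasResidualAt (fun y => a (-y)) (fun y p => H (-y) (-p)) (fun y => -v (-y)) r x := by
  obtain ⟨d, hd, rfl⟩ := h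
  refine ⟨d, fun hx => ?_, by simp only [neg_neg]⟩
  exact ((hd hx).comp x (hasDerivAt_neg x)).neg.congr_deriv (by ring)

lemma lt_of_residual_lt (ha : ∀ x, 0 ≤ a x) (hf : Continuous f) (hg : Continuous g) {y : ℝ}
    (hyx : y ≤ x) (hy : f y < g y) (hres : ∀ t ∈ Ioc y x, f t = g t →
      ∃ r s, r < s ∧ HasResidualAt a H f r t ∧ HasResidualAt a H g s t) : f x < g x := by
  refine sub_pos.1 (pos_of_hasDerivAt_pos_at_zeros (hg.sub hf) hyx (sub_pos.2 hy) ?_)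
  intro t ht hzero
  have heq : f t = g t := (sub_eq_zero.1 hzero).symm
  obtain ⟨-, -, hrs, ⟨d, hd, rfl⟩, ⟨e, he, rfl⟩⟩ := hres t ht heq
  have hmul : 0 < a t * (e - d) := by
    rw [heq] at hrs
    linarith
  exact ⟨e - d, pos_of_mul_pos_right hmul (ha t),
    (he (left_ne_zero_of_mul hmul.ne')).sub (hd (left_ne_zero_of_mul hmul.ne'))⟩

lemma abs_sub_le_gronwallBound (hf : Continuous f) (hg : Continuous g) {m r s c L δ : ℝ}
    (hmx : m ≤ x) (hc : 0 < c) (ha : ∀ t ∈ Ico m x, c ≤ a t)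
    (hfr : ∀ t ∈ Ico m x, HasResidualAt a H f r t) (hgs : ∀ t ∈ Ico m x, HasResidualAt a H g s t)
    (hL : ∀ t ∈ Ico m x, |H t (f t) - H t (g t)| ≤ L * |f t - g t|) (hδ : |f m - g m| ≤ δ) :
    |f x - g x| ≤ gronwallBound δ (L / c) (|r - s| / c) (x - m) := by
  refine norm_le_gronwallBound_of_norm_deriv_right_le (f := fun t => f t - g t)
    (f' := fun t => ((r - s) - (H t (f t) - H t (g t))) / a t) (hf.sub hg).continuousOn
    (fun t ht => ?_) hδ (fun t ht => ?_) x ⟨hmx, le_rfl⟩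
  · have hat : a t ≠ 0 := (hc.trans_le (ha t ht)).ne'
    exact (((hfr t ht).hasDerivAt hat).sub ((hgs t ht).hasDerivAt hat)).hasDerivWithinAt.congr_deriv
      (by ring)
  · have hat : 0 < a t := hc.trans_le (ha t ht)
    calc ‖((r - s) - (H t (f t) - H t (g t))) / a t‖
        = |(r - s) - (H t (f t) - H t (g t))| / a t := by
          rw [norm_div, Real.norm_eq_abs, Real.norm_of_nonneg hat.le]
      _ ≤ (|r - s| + L * |f t - g t|) / c :=
          div_le_div₀ (by linarith [abs_nonneg (r - s), (abs_nonneg _).trans (hL t ht)])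
            ((abs_sub _ _).trans (add_le_add_right (hL t ht) _)) hc (ha t ht)
      _ = L / c * ‖f t - g t‖ + |r - s| / c := by
          rw [Real.norm_eq_abs]
          ring

end HasResidualAt

end Residual

section Branches

/-- A continuous solution `v` of `a v' + H(·, v) = lam` that lies above the minimizers of `H` where
`a` vanishes; the derivative of `u⁺` at level `lam` is such a branch. -/
structure IsUpperBranch (a : ℝ → ℝ) (H : ℝ → ℝ → ℝ) (phat : ℝ → ℝ) (lam : ℝ) (v : ℝ → ℝ) :
    Prop where
  continuous : Continuous v
  hasResidualAt : ∀ x, HasResidualAt a H v lam x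
  phat_lt : ∀ x, a x = 0 → phat x < v x

/-- A continuous solution `v` of `a v' + H(·, v) = lam` that lies below the minimizers of `H` where
`a` vanishes; the derivative of `u⁻` at level `lam` is such a branch. -/
structure IsLowerBranch (a : ℝ → ℝ) (H : ℝ → ℝ → ℝ) (phat : ℝ → ℝ) (lam : ℝ) (v : ℝ → ℝ) :
    Prop where
  continuous : Continuous v
  hasResidualAt : ∀ x, HasResidualAt a H v lam x
  lt_phat : ∀ x, a x = 0 → v x < phat x

variable {a : ℝ → ℝ} {η : ℝ} {H : ℝ → ℝ → ℝ} {phat : ℝ → ℝ} {lam : ℝ} {f g : ℝ → ℝ}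

lemma exists_le_comp_neg_eq_zero (hzero : ∀ x, ∃ y ≥ x, a y = 0) (x : ℝ) :
    ∃ y ≤ x, a (-y) = 0 := by
  obtain ⟨y, hxy, hy⟩ := hzero (-x)
  exact ⟨-y, neg_le.1 hxy, by rwa [neg_neg]⟩

namespace IsUpperBranch

lemma lt_of_residual_lt (hf : IsUpperBranch a H phat lam f)
    (hH : IsQuasiconvexHamiltonian η H phat) (ha : ∀ x, 0 ≤ a x)
    (hzero : ∀ x, ∃ y ≤ x, a y = 0) {v : ℝ → ℝ} (hv : Continuous v)
    (hres : ∀ x, ∃ r < lam, HasResidualAt a H v r x) (x : ℝ) : v x < f x := by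
  obtain ⟨y, hyx, hy⟩ := hzero x
  obtain ⟨r, hr, hvy⟩ := hres y
  have hvf : H y (v y) < H y (f y) := by rwa [hvy.apply_eq hy, (hf.hasResidualAt y).apply_eq hy]
  refine HasResidualAt.lt_of_residual_lt (H := H) ha hv hf.continuous hyx
    (hH.lt_of_apply_lt (hf.phat_lt y hy).le hvf) fun t _ _ => ?_
  obtain ⟨s, hs, hvt⟩ := hres t
  exact ⟨s, lam, hs, hvt, hf.hasResidualAt t⟩

lemma lt_of_level_lt (hf : IsUpperBranch a H phat lam f) (hH : IsQuasiconvexHamiltonian η H phat)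
    (ha : ∀ x, 0 ≤ a x) (hzero : ∀ x, ∃ y ≤ x, a y = 0) {μ : ℝ}
    (hg : IsUpperBranch a H phat μ g) (hμ : μ < lam) (x : ℝ) : g x < f x :=
  hf.lt_of_residual_lt hH ha hzero hg.continuous (fun x => ⟨μ, hμ, hg.hasResidualAt x⟩) x

lemma const_lt (hf : IsUpperBranch a H phat lam f) (hH : IsQuasiconvexHamiltonian η H phat)
    (ha : ∀ x, 0 ≤ a x) (hzero : ∀ x, ∃ y ≤ x, a y = 0) {R : ℝ} (hR : ∀ x, H x R < lam) (x : ℝ) :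
    R < f x :=
  hf.lt_of_residual_lt hH ha hzero continuous_const
    (fun x => ⟨H x R, hR x, hasResidualAt_const R x⟩) x

-- For `B > (lam - μ) / η`, the shifted branch `f - B` starts below `g` and has residual less than
-- `μ` wherever it meets `g`.
lemma sub_le_div_of_phat_lt (hf : IsUpperBranch a H phat lam f)
    (hH : IsQuasiconvexHamiltonian η H phat) (ha : ∀ x, 0 ≤ a x) {μ : ℝ}
    (hg : IsUpperBranch a H phat μ g) (hμ : μ ≤ lam) {l m : ℝ} (hlm : l ≤ m) (hl : a l = 0)
    (hphat : ∀ t ∈ Icc l m, phat t < g t) : f m - g m ≤ (lam - μ) / η := by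
  refine le_of_forall_gt fun B hB => sub_lt_comm.1 ?_
  have hBη : lam - μ < η * B := (div_lt_iff₀' hH.eta_pos).1 hB
  have hB0 : 0 < B := (div_nonneg (sub_nonneg.2 hμ) hH.eta_pos.le).trans_lt hB
  refine HasResidualAt.lt_of_residual_lt (f := fun t => f t - B) ha
    (hf.continuous.sub continuous_const) hg.continuous hlm ?_ fun t ht heq =>
      ⟨_, μ, ?_, (hf.hasResidualAt t).sub_const B, hg.hasResidualAt t⟩
  · by_contra! hle
    have hgrowth := hH.mul_sub_le_right l (g l) (f l) (hg.phat_lt l hl).le (by linarith)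
    rw [(hf.hasResidualAt l).apply_eq hl, (hg.hasResidualAt l).apply_eq hl] at hgrowth
    have := mul_le_mul_of_nonneg_left (show B ≤ f l - g l by linarith) hH.eta_pos.le
    linarith
  · have hgrowth := hH.mul_sub_le_right t (g t) (f t) (hphat t (Ioc_subset_Icc_self ht)).le
      (by linarith)
    rw [show f t - g t = B by linarith] at hgrowth
    rw [heq]
    linarith

-- `l` is the last zero of `a` before `x`: near `l` the branch stays above `phat`, and farther to
-- the right `a` is bounded away from `0`.
lemma exists_phat_lt_and_le_coeff (hf : IsUpperBranch a H phat lam f)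
    (hH : IsQuasiconvexHamiltonian η H phat) (ha : ∀ x, 0 ≤ a x) (hac : Continuous a)
    (hzero : ∀ x, ∃ y ≤ x, a y = 0) (x : ℝ) :
    ∃ l m c, l ≤ m ∧ m ≤ x ∧ a l = 0 ∧ (∀ t ∈ Icc l m, phat t < f t) ∧
      0 < c ∧ ∀ t ∈ Ico m x, c ≤ a t := by
  obtain ⟨y, hyx, hy⟩ := hzero x
  have hcompact : IsCompact (Icc y x ∩ {t | a t = 0}) :=
    isCompact_Icc.inter_right (isClosed_eq hac continuous_const)
  obtain ⟨l, ⟨⟨hyl, hlx⟩, hl⟩, hgreatest⟩ := hcompact.exists_isGreatest ⟨y, ⟨le_rfl, hyx⟩, hy⟩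
  have hpos : ∀ t ∈ Ioc l x, 0 < a t := fun t ht =>
    (ha t).lt_of_ne' fun hat => ht.1.not_ge (hgreatest ⟨⟨hyl.trans ht.1.le, ht.2⟩, hat⟩)
  obtain ⟨m, hlm, hphat⟩ := mem_nhdsGE_iff_exists_Icc_subset.1
    (nhdsWithin_le_nhds (s := Ici l) (hH.eventually_phat_lt hf.continuous (hf.phat_lt l hl)))
  rcases hlx.eq_or_lt with rfl | hlx
  · exact ⟨l, l, 1, le_rfl, le_rfl, hl, fun t ht => hphat ⟨ht.1, ht.2.trans hlm.le⟩, one_pos,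
      by simp⟩
  · have hlm' : l < min m x := lt_min hlm hlx
    obtain ⟨s, hs, hmin⟩ := isCompact_Icc.exists_isMinOn
      (nonempty_Icc.2 (min_le_right m x)) hac.continuousOn
    exact ⟨l, min m x, a s, hlm'.le, min_le_right m x, hl,
      fun t ht => hphat ⟨ht.1, ht.2.trans (min_le_left m x)⟩,
      hpos s ⟨hlm'.trans_le hs.1, hs.2⟩, fun t ht => hmin (Ico_subset_Icc_self ht)⟩

lemma exists_sub_le_mul (hH : IsQuasiconvexHamiltonian η H phat) (ha : ∀ x, 0 ≤ a x)
    (hac : Continuous a) (hzero : ∀ x, ∃ y ≤ x, a y = 0) {F : ℝ → ℝ → ℝ} {lam₀ : ℝ}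
    (hF : ∀ μ > lam₀, IsUpperBranch a H phat μ (F μ)) {ν M : ℝ} (hν : lam₀ < ν) (hM : lam₀ < M)
    (x : ℝ) :
    ∃ C, ∀ μ₁ ∈ Ioo ν M, ∀ μ₂ ∈ Ioo ν M, μ₁ ≤ μ₂ → F μ₂ x - F μ₁ x ≤ C * (μ₂ - μ₁) := by
  obtain ⟨l, m, c, hlm, hmx, hl, hphat, hc, hca⟩ :=
    (hF ν hν).exists_phat_lt_and_le_coeff hH ha hac hzero x
  obtain ⟨P, hP⟩ := (isCompact_Icc (a := m) (b := x)).exists_bound_of_continuousOn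
    ((hF ν hν).continuous.prodMk (hF M hM).continuous).continuousOn
  obtain ⟨L, hL⟩ := hH.lipschitzOn P
  have hlt {μ₁ μ₂ : ℝ} (h₁ : lam₀ < μ₁) (h₂ : μ₁ < μ₂) (t : ℝ) : F μ₁ t < F μ₂ t :=
    (hF μ₂ (h₁.trans h₂)).lt_of_level_lt hH ha hzero (hF μ₁ h₁) h₂ t
  have hmem {μ : ℝ} (hμ : μ ∈ Ioo ν M) (t : ℝ) (ht : t ∈ Ico m x) : F μ t ∈ Icc (-P) P := by
    have hbound := hP t (Ico_subset_Icc_self ht)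
    rw [norm_prod_le_iff, Real.norm_eq_abs, Real.norm_eq_abs, abs_le, abs_le] at hbound
    exact ⟨hbound.1.1.trans (hlt hν hμ.1 t).le, (hlt (hν.trans hμ.1) hμ.2 t).le.trans hbound.2.2⟩
  refine ⟨gronwallBound (1 / η) (L / c) (1 / c) (x - m), fun μ₁ h₁ μ₂ h₂ hle => ?_⟩
  have hF₁ := hF μ₁ (hν.trans h₁.1)
  have hF₂ := hF μ₂ (hν.trans h₂.1)
  have hstart : |F μ₂ m - F μ₁ m| ≤ (μ₂ - μ₁) * (1 / η) := by
    have hnonneg : F μ₁ m ≤ F μ₂ m := by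
      rcases hle.eq_or_lt with rfl | hlt'
      · rfl
      · exact (hlt (hν.trans h₁.1) hlt' m).le
    rw [abs_of_nonneg (sub_nonneg.2 hnonneg), mul_one_div]
    exact hF₂.sub_le_div_of_phat_lt hH ha hF₁ hle hlm hl
      fun t ht => (hphat t ht).trans (hlt hν h₁.1 t)
  have hend := HasResidualAt.abs_sub_le_gronwallBound hF₂.continuous hF₁.continuous hmx hc hca
    (fun t _ => hF₂.hasResidualAt t) (fun t _ => hF₁.hasResidualAt t)
    (fun t ht => (hL t).dist_le_mul _ (hmem h₂ t ht) _ (hmem h₁ t ht)) hstart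
  rw [abs_of_nonneg (sub_nonneg.2 hle), ← mul_one_div (μ₂ - μ₁) c, gronwallBound_mul_left,
    mul_comm] at hend
  exact (le_abs_self _).trans hend

lemma continuousAt_level (hH : IsQuasiconvexHamiltonian η H phat) (ha : ∀ x, 0 ≤ a x)
    (hac : Continuous a) (hzero : ∀ x, ∃ y ≤ x, a y = 0) {F : ℝ → ℝ → ℝ} {lam₀ : ℝ}
    (hF : ∀ μ > lam₀, IsUpperBranch a H phat μ (F μ)) (hlam : lam₀ < lam) (x : ℝ) :
    ContinuousAt (fun μ => F μ x) lam := by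
  obtain ⟨ν, hν, hνlam⟩ := exists_between hlam
  obtain ⟨M, hM⟩ := exists_gt lam
  obtain ⟨C, hC⟩ := exists_sub_le_mul hH ha hac hzero hF hν (hlam.trans hM) x
  have hLip : LipschitzOnWith C.toNNReal (fun μ => F μ x) (Ioo ν M) := by
    refine LipschitzOnWith.of_le_add_mul _ fun μ₁ h₁ μ₂ h₂ => ?_
    rcases le_or_gt μ₂ μ₁ with hle | hlt
    · rw [Real.dist_eq, abs_of_nonneg (sub_nonneg.2 hle)]
      have := mul_le_mul_of_nonneg_right (Real.le_coe_toNNReal C) (sub_nonneg.2 hle)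
      linarith [hC μ₂ h₂ μ₁ h₁ hle]
    · have := (hF μ₂ (hν.trans h₂.1)).lt_of_level_lt hH ha hzero (hF μ₁ (hν.trans h₁.1)) hlt x
      exact this.le.trans (le_add_of_nonneg_right (by positivity))
  exact hLip.continuousOn.continuousAt (Ioo_mem_nhds hνlam hM)

end IsUpperBranch

namespace IsLowerBranch

lemma reflect (hf : IsLowerBranch a H phat lam f) :
    IsUpperBranch (fun x => a (-x)) (fun x p => H (-x) (-p)) (fun x => -phat (-x)) lam
      (fun x => -f (-x)) where
  continuous := (hf.continuous.comp continuous_neg).neg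
  hasResidualAt x := (hf.hasResidualAt (-x)).reflect
  phat_lt x hx := neg_lt_neg (hf.lt_phat (-x) hx)

lemma lt_of_level_lt (hf : IsLowerBranch a H phat lam f) (hH : IsQuasiconvexHamiltonian η H phat)
    (ha : ∀ x, 0 ≤ a x) (hzero : ∀ x, ∃ y ≥ x, a y = 0) {μ : ℝ}
    (hg : IsLowerBranch a H phat μ g) (hμ : μ < lam) (x : ℝ) : f x < g x := by
  simpa using hf.reflect.lt_of_level_lt hH.reflect (fun x => ha (-x))
    (exists_le_comp_neg_eq_zero hzero) hg.reflect hμ (-x)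

lemma lt_const (hf : IsLowerBranch a H phat lam f) (hH : IsQuasiconvexHamiltonian η H phat)
    (ha : ∀ x, 0 ≤ a x) (hzero : ∀ x, ∃ y ≥ x, a y = 0) {R : ℝ} (hR : ∀ x, H x R < lam) (x : ℝ) :
    f x < R := by
  simpa using hf.reflect.const_lt hH.reflect (fun x => ha (-x))
    (exists_le_comp_neg_eq_zero hzero) (R := -R) (by simpa using fun x => hR (-x)) (-x)

lemma continuousAt_level (hH : IsQuasiconvexHamiltonian η H phat) (ha : ∀ x, 0 ≤ a x)
    (hac : Continuous a) (hzero : ∀ x, ∃ y ≥ x, a y = 0) {F : ℝ → ℝ → ℝ} {lam₀ : ℝ}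
    (hF : ∀ μ > lam₀, IsLowerBranch a H phat μ (F μ)) (hlam : lam₀ < lam) (x : ℝ) :
    ContinuousAt (fun μ => F μ x) lam := by
  have hreflect := IsUpperBranch.continuousAt_level hH.reflect (fun x => ha (-x))
    (hac.comp continuous_neg) (exists_le_comp_neg_eq_zero hzero)
    (fun μ hμ => (hF μ hμ).reflect) hlam (-x)
  simpa only [Pi.neg_def, neg_neg] using hreflect.neg

end IsLowerBranch

lemma exists_level_forall_lt_neg_and_lt (hH : IsQuasiconvexHamiltonian η H phat)
    (ha : ∀ x, 0 ≤ a x) (hzero_left : ∀ x, ∃ y ≤ x, a y = 0) (hzero_right : ∀ x, ∃ y ≥ x, a y = 0)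
    {F G : ℝ → ℝ → ℝ} {lam₀ : ℝ} (hF : ∀ μ > lam₀, IsLowerBranch a H phat μ (F μ))
    (hG : ∀ μ > lam₀, IsUpperBranch a H phat μ (G μ)) (R : ℝ) :
    ∃ lamR > lam₀, ∀ lam > lamR, ∀ x, F lam x < -R ∧ R < G lam x := by
  obtain ⟨B, hB⟩ := hH.bddAbove R
  obtain ⟨B', hB'⟩ := hH.bddAbove (-R)
  obtain ⟨lamR, hlamR, hge, hge'⟩ := ((eventually_gt_atTop lam₀).and
    ((eventually_ge_atTop B).and (eventually_ge_atTop B'))).exists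
  refine ⟨lamR, hlamR, fun lam hlam x => ⟨?_, ?_⟩⟩
  · exact (hF lam (hlamR.trans hlam)).lt_const hH ha hzero_right
      (fun y => ((hB' ⟨y, rfl⟩).trans hge').trans_lt hlam) x
  · exact (hG lam (hlamR.trans hlam)).const_lt hH ha hzero_left
      (fun y => ((hB ⟨y, rfl⟩).trans hge).trans_lt hlam) x

end Branches

section DegenerateDiffusion

variable {a : ℝ → ℝ}

lemma continuous_of_continuous_sqrt (ha : ∀ x, 0 ≤ a x) (hsqrt : Continuous fun x => √(a x)) :
    Continuous a := by
  simpa only [Pi.pow_def, Real.sq_sqrt (ha _)] using hsqrt.pow 2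

lemma le_sq_of_lipschitzWith_sqrt (ha : ∀ x, 0 ≤ a x) {K : NNReal}
    (hsqrt : LipschitzWith K fun x => √(a x)) {x₀ : ℝ} (hx₀ : a x₀ = 0) (x : ℝ) :
    a x ≤ (K : ℝ) ^ 2 * (x - x₀) ^ 2 := by
  have hle : √(a x) ≤ K * |x - x₀| := by
    simpa [Real.dist_eq, hx₀, abs_of_nonneg (Real.sqrt_nonneg _)] using hsqrt.dist_le_mul x x₀
  calc a x = √(a x) ^ 2 := (Real.sq_sqrt (ha x)).symm
    _ ≤ (K * |x - x₀|) ^ 2 := by gcongr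
    _ = (K : ℝ) ^ 2 * (x - x₀) ^ 2 := by rw [mul_pow, sq_abs]

lemma exists_mem_eq_zero_of_isBounded_component (ha : ∀ x, 0 ≤ a x) {x : ℝ}
    (hbdd : 0 < a x → Bornology.IsBounded (connectedComponentIn {y | 0 < a y} x)) {S : Set ℝ}
    (hS : IsPreconnected S) (hxS : x ∈ S) (hunbdd : ¬Bornology.IsBounded S) :
    ∃ y ∈ S, a y = 0 := by
  by_contra! hne
  have hpos : S ⊆ {y | 0 < a y} := fun y hy => (ha y).lt_of_ne' (hne y hy)
  exact hunbdd ((hbdd (hpos hxS)).subset (hS.subset_connectedComponentIn hxS hpos))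

lemma exists_le_eq_zero_of_isBounded_component (ha : ∀ x, 0 ≤ a x) {x : ℝ}
    (hbdd : 0 < a x → Bornology.IsBounded (connectedComponentIn {y | 0 < a y} x)) :
    ∃ y ≤ x, a y = 0 :=
  exists_mem_eq_zero_of_isBounded_component ha hbdd isPreconnected_Iic self_mem_Iic
    fun h => not_bddBelow_Iic x h.bddBelow

lemma exists_ge_eq_zero_of_isBounded_component (ha : ∀ x, 0 ≤ a x) {x : ℝ}
    (hbdd : 0 < a x → Bornology.IsBounded (connectedComponentIn {y | 0 < a y} x)) :
    ∃ y ≥ x, a y = 0 :=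
  exists_mem_eq_zero_of_isBounded_component ha hbdd isPreconnected_Ici self_mem_Ici
    fun h => not_bddAbove_Ici x h.bddAbove

end DegenerateDiffusion

section MainTheorem

variable {a : ℝ → ℝ} {H : ℝ → ℝ → ℝ}

lemma ViscSolOn.hasResidualAt_deriv {lam : ℝ} {u : ℝ → ℝ} (h : ViscSolOn a H lam univ u)
    (ha : ∀ x, 0 ≤ a x) {K : NNReal} (hsqrt : LipschitzWith K fun x => √(a x))
    (hH : Continuous (Function.uncurry H)) (hu : ContDiff ℝ 1 u) (x : ℝ) :
    HasResidualAt a H (deriv u) lam x := by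
  rcases (ha x).eq_or_lt' with hx | hx
  · have heq := h.eq_of_hasDerivAt_of_le_sq hH hu.continuous (sq_nonneg (K : ℝ))
      (le_sq_of_lipschitzWith_sqrt ha hsqrt hx) (hu.differentiable one_ne_zero x).hasDerivAt
    exact ⟨0, fun hne => absurd hx hne, by rw [heq, mul_zero, zero_add]⟩
  · exact ⟨_, fun _ => h.hasDerivAt_deriv (continuous_of_continuous_sqrt ha hsqrt.continuous) hH hu
      hx, by field_simp; ring⟩

-- If `v' = w'` at a zero of `a`, then `u` shares this derivative and `H` would take both values
-- `lam₀` and `μ` there.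
lemma ViscSolOn.deriv_lt_phat_and_phat_lt_deriv {η : ℝ} {phat : ℝ → ℝ}
    (hH : IsQuasiconvexHamiltonian η H phat) {x K : ℝ} (hK : 0 ≤ K)
    (ha : ∀ y, a y ≤ K * (y - x) ^ 2) {u v w : ℝ → ℝ} {lam₀ μ : ℝ} (hne : lam₀ ≠ μ)
    (hu : ViscSolOn a H lam₀ univ u) (huc : Continuous u) (hv : ViscSolOn a H μ univ v)
    (hvd : Differentiable ℝ v) (hw : ViscSolOn a H μ univ w) (hwd : Differentiable ℝ w)
    (hvu : Monotone fun y => u y - v y) (huw : Monotone fun y => w y - u y) :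
    deriv v x < phat x ∧ phat x < deriv w x := by
  have hHv := hv.eq_of_hasDerivAt_of_le_sq hH.continuous hvd.continuous hK ha (hvd x).hasDerivAt
  have hHw := hw.eq_of_hasDerivAt_of_le_sq hH.continuous hwd.continuous hK ha (hwd x).hasDerivAt
  refine hH.lt_phat_and_phat_lt_of_apply_eq ?_ (hHv.trans hHw.symm)
  have hvw : Monotone fun y => w y - v y := by simpa using huw.add hvu
  refine (deriv_le_deriv_of_monotone_sub hvw (hvd x) (hwd x)).lt_of_ne fun heq => hne ?_
  have hud : HasDerivAt u (deriv v x) x :=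
    hasDerivAt_of_monotone_sub hvu huw (hvd x).hasDerivAt (heq ▸ (hwd x).hasDerivAt)
  rw [← hu.eq_of_hasDerivAt_of_le_sq hH.continuous huc hK ha hud, hHv]

lemma ViscSolOn.isLowerBranch_and_isUpperBranch_deriv {η : ℝ} {phat : ℝ → ℝ}
    (hH : IsQuasiconvexHamiltonian η H phat) (ha : ∀ x, 0 ≤ a x) {K : NNReal}
    (hsqrt : LipschitzWith K fun x => √(a x)) {u v w : ℝ → ℝ} {lam₀ μ : ℝ} (hne : lam₀ ≠ μ)
    (hu : ViscSolOn a H lam₀ univ u) (huc : Continuous u) (hv : ViscSolOn a H μ univ v)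
    (hvd : ContDiff ℝ 1 v) (hw : ViscSolOn a H μ univ w) (hwd : ContDiff ℝ 1 w)
    (hvu : Monotone fun y => u y - v y) (huw : Monotone fun y => w y - u y) :
    IsLowerBranch a H phat μ (deriv v) ∧ IsUpperBranch a H phat μ (deriv w) := by
  have hphat (x : ℝ) (hx : a x = 0) : deriv v x < phat x ∧ phat x < deriv w x :=
    deriv_lt_phat_and_phat_lt_deriv hH (sq_nonneg (K : ℝ))
      (le_sq_of_lipschitzWith_sqrt ha hsqrt hx) hne hu huc hv (hvd.differentiable one_ne_zero) hw
      (hwd.differentiable one_ne_zero) hvu huw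
  exact ⟨⟨hvd.continuous_deriv_one, hv.hasResidualAt_deriv ha hsqrt hH.continuous hvd,
      fun x hx => (hphat x hx).1⟩,
    ⟨hwd.continuous_deriv_one, hw.hasResidualAt_deriv ha hsqrt hH.continuous hwd,
      fun x hx => (hphat x hx).2⟩⟩

theorem statement_16_general {η : ℝ} {phat : ℝ → ℝ} (hH : IsQuasiconvexHamiltonian η H phat)
    (ha : ∀ x, 0 ≤ a x) {K : NNReal} (hsqrt : LipschitzWith K fun x => √(a x))
    (hbdd : ∀ x, 0 < a x → Bornology.IsBounded (connectedComponentIn {y | 0 < a y} x))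
    {lam₀ : ℝ} {u₀ : ℝ → ℝ} (hu₀ : LocallyLipschitz u₀) (hsol₀ : ViscSolOn a H lam₀ univ u₀)
    {up um : ℝ → ℝ → ℝ}
    (hup : ∀ μ > lam₀, ContDiff ℝ 1 (up μ) ∧ ViscSolOn a H μ univ (up μ) ∧
      deriv u₀ ≤ᵐ[volume] deriv (up μ))
    (hum : ∀ μ > lam₀, ContDiff ℝ 1 (um μ) ∧ ViscSolOn a H μ univ (um μ) ∧
      deriv (um μ) ≤ᵐ[volume] deriv u₀) :
    (∀ lam μ, lam₀ < μ → μ < lam → ∀ x,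
      deriv (um lam) x < deriv (um μ) x ∧ deriv (um μ) x < deriv (up μ) x ∧
        deriv (up μ) x < deriv (up lam) x) ∧
    (∀ lam, lam₀ < lam → ∀ x,
      ContinuousAt (fun μ => deriv (up μ) x) lam ∧ ContinuousAt (fun μ => deriv (um μ) x) lam) ∧
    ∀ R, ∃ lamR, lam₀ < lamR ∧ ∀ lam, lamR < lam → ∀ x,
      deriv (um lam) x < -R ∧ R < deriv (up lam) x := by
  have hac : Continuous a := continuous_of_continuous_sqrt ha hsqrt.continuous
  have hzero_left (x : ℝ) := exists_le_eq_zero_of_isBounded_component ha (hbdd x)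
  have hzero_right (x : ℝ) := exists_ge_eq_zero_of_isBounded_component ha (hbdd x)
  have hmono_up (μ : ℝ) (hμ : lam₀ < μ) : Monotone fun x => up μ x - u₀ x :=
    monotone_sub_of_deriv_ae_le hu₀ (hup μ hμ).1.locallyLipschitz (hup μ hμ).2.2
  have hmono_um (μ : ℝ) (hμ : lam₀ < μ) : Monotone fun x => u₀ x - um μ x :=
    monotone_sub_of_deriv_ae_le (hum μ hμ).1.locallyLipschitz hu₀ (hum μ hμ).2.2
  have hbranch (μ : ℝ) (hμ : lam₀ < μ) :
      IsLowerBranch a H phat μ (deriv (um μ)) ∧ IsUpperBranch a H phat μ (deriv (up μ)) :=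
    ViscSolOn.isLowerBranch_and_isUpperBranch_deriv hH ha hsqrt hμ.ne hsol₀ hu₀.continuous
      (hum μ hμ).2.1 (hum μ hμ).1 (hup μ hμ).2.1 (hup μ hμ).1 (hmono_um μ hμ) (hmono_up μ hμ)
  have hup_lt {μ lam : ℝ} (hμ : lam₀ < μ) (hlam : μ < lam) (x : ℝ) :
      deriv (up μ) x < deriv (up lam) x :=
    (hbranch lam (hμ.trans hlam)).2.lt_of_level_lt hH ha hzero_left (hbranch μ hμ).2 hlam x
  have hum_lt {μ lam : ℝ} (hμ : lam₀ < μ) (hlam : μ < lam) (x : ℝ) :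
      deriv (um lam) x < deriv (um μ) x :=
    (hbranch lam (hμ.trans hlam)).1.lt_of_level_lt hH ha hzero_right (hbranch μ hμ).1 hlam x
  refine ⟨fun lam μ hμ hlam x => ⟨hum_lt hμ hlam x, ?_, hup_lt hμ hlam x⟩,
    fun lam hlam x => ⟨?_, ?_⟩, exists_level_forall_lt_neg_and_lt hH ha hzero_left hzero_right
      (fun μ hμ => (hbranch μ hμ).1) (fun μ hμ => (hbranch μ hμ).2)⟩
  · obtain ⟨ν, hν, hνμ⟩ := exists_between hμ
    have hmono : Monotone fun x => up ν x - um ν x := by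
      simpa using (hmono_up ν hν).add (hmono_um ν hν)
    have hle : deriv (um ν) x ≤ deriv (up ν) x := deriv_le_deriv_of_monotone_sub hmono
      ((hum ν hν).1.differentiable one_ne_zero x) ((hup ν hν).1.differentiable one_ne_zero x)
    exact (hum_lt hν hνμ x).trans_le (hle.trans (hup_lt hν hνμ x).le)
  · exact IsUpperBranch.continuousAt_level hH ha hac hzero_left (fun μ hμ => (hbranch μ hμ).2)
      hlam x
  · exact IsLowerBranch.continuousAt_level hH ha hac hzero_right (fun μ hμ => (hbranch μ hμ).1)
      hlam x

end MainTheorem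

/-- Proposition `appC prop monotonicity derivatives`: with `u^±_μ`
(`μ > λ₀`) the distinguished `C¹` solutions at level `μ` (value `0` at the origin,
derivative a.e. above resp. below `u'_{λ₀}`):
(i) for `λ > μ > λ₀`, `(u⁺_λ)' > (u⁺_μ)' > (u⁻_μ)' > (u⁻_λ)'` on `ℝ`;
(ii) for `λ > λ₀`, `(u^±_μ)'(x) → (u^±_λ)'(x)` as `μ → λ` (within `(λ₀,∞)`), for every `x`;
(iii) for every `R > ‖u'_{λ₀}‖_{L^∞(A)}` there is `λ_R > λ₀` with
`(u⁻_λ)' < -R < R < (u⁺_λ)'` on `ℝ` for every `λ > λ_R`. -/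
theorem statement_16
    (a : ℝ → ℝ) (H : ℝ → ℝ → ℝ) (phat : ℝ → ℝ)
    (κ α0 α1 γ η : ℝ)
    (harange : ∀ x, a x ∈ Set.Icc (0:ℝ) 1)
    (hκ : 0 < κ) (hA2 : ∀ x y : ℝ, |Real.sqrt (a x) - Real.sqrt (a y)| ≤ κ * |x - y|)
    (hA1' : CondA1' a)
    (hα0 : 0 < α0) (hα1 : 0 < α1) (hγ : 2 < γ) (hη : 0 < η)
    (hH : HamSqc α0 α1 γ η H phat)
    (lam0 : ℝ) (hlam0 : lam0 = CriticalValue a H)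
    (ulam0 : ℝ → ℝ)
    (hulip : ∃ L : NNReal, LipschitzWith L ulam0)
    (husol : ViscSolOn a H lam0 Set.univ ulam0)
    (up um : ℝ → ℝ → ℝ)
    (hup : ∀ μ : ℝ, lam0 < μ →
      ContDiff ℝ 1 (up μ) ∧ ViscSolOn a H μ Set.univ (up μ) ∧ up μ 0 = 0 ∧
      (∀ᵐ x ∂(volume : Measure ℝ), deriv ulam0 x < deriv (up μ) x))
    (hum : ∀ μ : ℝ, lam0 < μ →
      ContDiff ℝ 1 (um μ) ∧ ViscSolOn a H μ Set.univ (um μ) ∧ um μ 0 = 0 ∧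
      (∀ᵐ x ∂(volume : Measure ℝ), deriv (um μ) x < deriv ulam0 x)) :
    (∀ lam μ : ℝ, lam0 < μ → μ < lam → ∀ x : ℝ,
      deriv (um lam) x < deriv (um μ) x ∧
      deriv (um μ) x < deriv (up μ) x ∧
      deriv (up μ) x < deriv (up lam) x) ∧
    (∀ lam : ℝ, lam0 < lam → ∀ x : ℝ,
      Tendsto (fun μ : ℝ => deriv (up μ) x) (𝓝[Set.Ioi lam0] lam)
        (𝓝 (deriv (up lam) x)) ∧
      Tendsto (fun μ : ℝ => deriv (um μ) x) (𝓝[Set.Ioi lam0] lam)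
        (𝓝 (deriv (um lam) x))) ∧
    (∀ R : ℝ, (∃ M : ℝ, M < R ∧ ∀ x : ℝ, 0 < a x → |deriv ulam0 x| ≤ M) →
      ∃ lamR : ℝ, lam0 < lamR ∧ ∀ lam : ℝ, lamR < lam → ∀ x : ℝ,
        deriv (um lam) x < -R ∧ R < deriv (up lam) x) := by
  have hsqrt : LipschitzWith κ.toNNReal fun x => √(a x) := LipschitzWith.of_dist_le_mul
    fun x y => by simpa only [Real.dist_eq, Real.coe_toNNReal κ hκ.le] using hA2 x y
  obtain ⟨hmono, hcont, hlarge⟩ := statement_16_general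
    (hH.isQuasiconvexHamiltonian hα1.le hη) (fun x => (harange x).1) hsqrt hA1'.2
    hulip.choose_spec.locallyLipschitz husol
    (fun μ hμ => ⟨(hup μ hμ).1, (hup μ hμ).2.1, (hup μ hμ).2.2.2.mono fun _ => le_of_lt⟩)
    (fun μ hμ => ⟨(hum μ hμ).1, (hum μ hμ).2.1, (hum μ hμ).2.2.2.mono fun _ => le_of_lt⟩)
  exact ⟨hmono, fun lam hlam x => ⟨(hcont lam hlam x).1.mono_left nhdsWithin_le_nhds,
    (hcont lam hlam x).2.mono_left nhdsWithin_le_nhds⟩, fun R _ => hlarge R⟩
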